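/- arXiv:1903.01767 — 9 statements merged into one kernel-verified Lean document; each statement's English description precedes it below -/
import Mathlib

section
/- The single-power-level rate-splitting region equals the polyhedral outer-bound region: D_RS = D. -/
/-!
Outer bound: in `d(S) = p(S) + c(S)`, bound `p` at `min S` by `a`, the other `p i` by `α i`, and
`c(S)` by `1 - a`.

Achievability: put `m i = min (d i) (α i)`, let `j` maximise `m`, and take `p = m`, `c = d - m`,
`a = m j`. With `T = {i | α i < d i}` the total common rate is `∑ i ∈ T, (d i - α i)`, so what is
needed is `m j + ∑ i ∈ T, (d i - α i) ≤ 1`. This is the outer bound for `S = insert j T`: since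
`min S ≤ j` and `α` is antitone, that bound gives `∑ i ∈ S, (d i - α i) ≤ 1 - α j`.
-/

open Finset

/-- The polyhedral outer-bound region `D`:
`d_i ≥ 0` for all `i`, and `d(S) ≤ 1 + α(S \ {min S})` for every nonempty `S`. -/
def outerRegion (K : ℕ) (α : Fin K → ℝ) : Set (Fin K → ℝ) :=
  {d | (∀ i, 0 ≤ d i) ∧
    ∀ (S : Finset (Fin K)) (hS : S.Nonempty),
      ∑ i ∈ S, d i ≤ 1 + ∑ i ∈ S.erase (S.min' hS), α i}

/-- The single-power-level rate-splitting region `D_RS`. -/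
def rsRegion (K : ℕ) (α : Fin K → ℝ) : Set (Fin K → ℝ) :=
  {d | ∃ (p c : Fin K → ℝ) (a : ℝ),
    0 ≤ a ∧ a ≤ 1 ∧
    (∀ i, d i = p i + c i) ∧
    (∀ i, 0 ≤ p i) ∧ (∀ i, 0 ≤ c i) ∧
    (∀ i, p i ≤ min a (α i)) ∧
    ∑ i, c i ≤ 1 - a}

/-- The single-power-level rate-splitting region equals the polyhedral
outer-bound region: `D_RS = D`. -/
theorem rs_eq_outer (K : ℕ) (hK : 1 ≤ K) (α : Fin K → ℝ)
    (hmono : ∀ i j : Fin K, i ≤ j → α j ≤ α i)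
    (h0 : ∀ i, 0 ≤ α i) (h1 : ∀ i, α i ≤ 1) :
    rsRegion K α = outerRegion K α := by
  ext d
  constructor
  · rintro ⟨p, c, a, -, -, hd, hp, hc, hpa, hsum⟩
    refine ⟨fun i => by rw [hd]; exact add_nonneg (hp i) (hc i), fun S hS => ?_⟩
    have hcS : ∑ i ∈ S, c i ≤ ∑ i, c i :=
      sum_le_sum_of_subset_of_nonneg (subset_univ S) fun i _ _ => hc i
    have hpS : ∑ i ∈ S.erase (S.min' hS), p i ≤ ∑ i ∈ S.erase (S.min' hS), α i :=
      sum_le_sum fun i _ => (hpa i).trans (min_le_right _ _)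
    have hmin : p (S.min' hS) ≤ a := (hpa _).trans (min_le_left _ _)
    have hsplit := add_sum_erase S p (S.min'_mem hS)
    have hdS : ∑ i ∈ S, d i = ∑ i ∈ S, p i + ∑ i ∈ S, c i := by
      rw [← sum_add_distrib]
      exact sum_congr rfl fun i _ => hd i
    linarith
  · rintro ⟨hd, hS⟩
    obtain ⟨j, -, hj⟩ := exists_max_image univ (fun i => min (d i) (α i))
      ⟨(⟨0, hK⟩ : Fin K), mem_univ _⟩
    have hm : ∀ i, 0 ≤ min (d i) (α i) := fun i => le_min (hd i) (h0 i)
    refine ⟨fun i => min (d i) (α i), fun i => d i - min (d i) (α i), min (d j) (α j), hm j,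
      (min_le_right _ _).trans (h1 j), fun i => by ring, hm,
      fun i => sub_nonneg.2 (min_le_left _ _),
      fun i => le_min (hj i (mem_univ i)) (min_le_right _ _), ?_⟩
    set T : Finset (Fin K) := univ.filter fun i => α i < d i with hT
    have hcT : ∑ i, (d i - min (d i) (α i)) = ∑ i ∈ T, (d i - α i) := by
      rw [hT, sum_filter]
      refine sum_congr rfl fun i _ => ?_
      split_ifs with h
      · rw [min_eq_right h.le]
      · rw [min_eq_left (not_lt.1 h), sub_self]
    have hne : (insert j T).Nonempty := insert_nonempty j T
    have hbound := hS (insert j T) hne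
    have hα := hmono _ j (min'_le (insert j T) j (mem_insert_self j T))
    have hsplit := add_sum_erase (insert j T) α (min'_mem _ hne)
    have hkey : ∑ i ∈ insert j T, (d i - α i) ≤ 1 - α j := by
      rw [sum_sub_distrib]
      linarith
    rw [hcT]
    by_cases hjT : j ∈ T
    · rw [insert_eq_of_mem hjT] at hkey
      linarith [min_le_right (d j) (α j)]
    · rw [sum_insert hjT] at hkey
      linarith [min_le_left (d j) (α j)]
end

section
/- Every tuple in the outer-bound region is achievable by single-power-level rate-splitting: D ⊆ D_RS. -/
/-!
Split `d i` into the private part `p i = min (d i) (α i)` and the common part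
`c i = d i - p i`, and take for the power level `a` the largest private part, attained at `i₀`
say. The only nontrivial requirement is `a + ∑ i, c i ≤ 1`. The common parts are supported on
`S = {i | α i < d i}`, where `c i = d i - α i`.

* If some `s ∈ S` satisfies `s ≤ i₀`, then `α (min S) ≥ α i₀ ≥ a` by monotonicity, and the
  outer bound for `S`, which reads `α (min S) + ∑ i ∈ S, (d i - α i) ≤ 1`, suffices.
* Otherwise `i₀` is the minimum of `insert i₀ S`, and the outer bound for this set reads
  `d i₀ + ∑ i ∈ S, (d i - α i) ≤ 1`, which suffices since `d i₀ ≥ a`.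
-/

open Finset

/-- Every tuple in the outer-bound region is achievable by single-power-level
rate-splitting: `D ⊆ D_RS`. -/
theorem outer_subset_rs (K : ℕ) (hK : 1 ≤ K) (α : Fin K → ℝ)
    (hmono : ∀ i j : Fin K, i ≤ j → α j ≤ α i)
    (h0 : ∀ i, 0 ≤ α i) (h1 : ∀ i, α i ≤ 1) :
    outerRegion K α ⊆ rsRegion K α := by
  rintro d ⟨hd, hS⟩
  obtain ⟨i₀, -, hi₀⟩ := Finset.exists_max_image (Finset.univ : Finset (Fin K))
    (fun i => min (d i) (α i)) ⟨⟨0, hK⟩, Finset.mem_univ _⟩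
  have hd₀ : min (d i₀) (α i₀) ≤ d i₀ := min_le_left _ _
  have hα₀ : min (d i₀) (α i₀) ≤ α i₀ := min_le_right _ _
  refine ⟨fun i => min (d i) (α i), fun i => d i - min (d i) (α i), min (d i₀) (α i₀),
    le_min (hd _) (h0 _), hα₀.trans (h1 _), fun i => by ring, fun i => le_min (hd i) (h0 i),
    fun i => sub_nonneg.2 (min_le_left _ _),
    fun i => le_min (hi₀ i (Finset.mem_univ _)) (min_le_right _ _), ?_⟩
  set S : Finset (Fin K) := Finset.univ.filter (fun i => α i < d i) with hSdef
  have hsum : ∑ i, (d i - min (d i) (α i)) = ∑ i ∈ S, d i - ∑ i ∈ S, α i := by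
    rw [← Finset.sum_sub_distrib, hSdef, Finset.sum_filter]
    refine Finset.sum_congr rfl fun i _ => ?_
    split_ifs with h
    · rw [min_eq_right h.le]
    · rw [min_eq_left (not_lt.1 h), sub_self]
  rw [hsum]
  by_cases hs : ∃ s ∈ S, s ≤ i₀
  · obtain ⟨s, hsS, hsi⟩ := hs
    have hne : S.Nonempty := ⟨s, hsS⟩
    have hbound := hS S hne
    have herase := Finset.sum_erase_add S α (S.min'_mem hne)
    have hmin := hmono _ _ ((S.min'_le s hsS).trans hsi)
    linarith
  · push Not at hs
    have hnot : i₀ ∉ S := fun h => lt_irrefl _ (hs _ h)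
    have hne : (insert i₀ S).Nonempty := Finset.insert_nonempty _ _
    have hmin : (insert i₀ S).min' hne = i₀ := by
      refine le_antisymm (Finset.min'_le _ _ (Finset.mem_insert_self _ _))
        (Finset.le_min' _ _ _ fun y hy => ?_)
      rcases Finset.mem_insert.1 hy with rfl | hy
      · exact le_rfl
      · exact (hs y hy).le
    have hbound := hS _ hne
    rw [hmin, Finset.erase_insert hnot, Finset.sum_insert hnot] at hbound
    linarith
end

section
/- Restricting the common part to use the full residual power is lossless: for every d ∈ D there exist a ∈ [0,1] and c ∈ ℝ^K with c_i ≥ 0 for all i, c({1,…,K}) = 1 − a, and 0 ≤ d_i − c_i ≤ min(a, α_i) for all i ∈ {1,…,K}. -/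
/-!
Write `μ i = min (d i) (α i)`. If `d` sums to at most `1`, take `c = d` and let `a` be the slack.
Otherwise take `a = max μ`; then `d i - c i` may be any number in `[0, μ i]`, so
`c = d - u • μ` with `u ∈ [0, 1]` works as soon as the required total `1 - a` lies between
`∑ (d - μ)` and `∑ d`. Only `a + ∑ (d - μ) ≤ 1` needs the region
(`exists_max_add_sum_sub_min_le_one`). It is the inequality of `D` for the set `{i | α i < d i}`
together with a maximizer `s` of `μ`, where monotonicity of `α` allows `s` to be chosen as the
least element of that set.
-/

open Finset

/-- The maximum of `min (d i) (α i)` and the total excess of `d` over `α` sum to at most `1`. -/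
theorem exists_max_add_sum_sub_min_le_one {K : ℕ} (hK : 1 ≤ K) {α : Fin K → ℝ}
    (hmono : ∀ i j : Fin K, i ≤ j → α j ≤ α i)
    {d : Fin K → ℝ} (hd : d ∈ outerRegion K α) :
    ∃ s : Fin K, (∀ i, min (d i) (α i) ≤ min (d s) (α s)) ∧
      min (d s) (α s) + ∑ i, (d i - min (d i) (α i)) ≤ 1 := by
  obtain ⟨j, -, hj⟩ := exists_max_image univ (fun i => min (d i) (α i)) ⟨⟨0, hK⟩, mem_univ _⟩
  set T : Finset (Fin K) := univ.filter fun i => α i < d i with hT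
  obtain ⟨s, hsT, hsj, hs⟩ : ∃ s, (∀ t ∈ T, s ≤ t) ∧ s ≤ j ∧ (s = j ∨ s ∈ T) := by
    have hne : (insert j T).Nonempty := insert_nonempty j T
    exact ⟨(insert j T).min' hne, fun t ht => min'_le _ _ (mem_insert_of_mem ht),
      min'_le _ _ (mem_insert_self j T), mem_insert.1 (min'_mem _ hne)⟩
  -- `s` also maximizes: if `α s < d s`, then `min (d s) (α s) = α s ≥ α j`.
  have hjs : min (d j) (α j) ≤ min (d s) (α s) := by
    rcases hs with rfl | hs
    · exact le_rfl
    · rw [min_eq_right (mem_filter.1 hs).2.le]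
      exact (min_le_right _ _).trans (hmono s j hsj)
  refine ⟨s, fun i => (hj i (mem_univ i)).trans hjs, ?_⟩
  have hne : (insert s T).Nonempty := insert_nonempty s T
  have hmin : (insert s T).min' hne = s :=
    le_antisymm (min'_le _ _ (mem_insert_self s T)) <|
      le_min' _ _ _ fun t ht => by
        rcases mem_insert.1 ht with rfl | ht
        · exact le_rfl
        · exact hsT t ht
  have hD := hd.2 (insert s T) hne
  rw [hmin, ← add_sum_erase _ _ (mem_insert_self s T)] at hD
  have hsub : ∑ i, (d i - min (d i) (α i)) = ∑ i ∈ insert s T, (d i - min (d i) (α i)) := by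
    refine (sum_subset (subset_univ _) fun i _ hi => ?_).symm
    have hi' : d i ≤ α i := by
      by_contra! h
      exact hi (mem_insert_of_mem (by simp [hT, h]))
    rw [min_eq_left hi', sub_self]
  have herase : ∑ i ∈ (insert s T).erase s, (d i - min (d i) (α i)) =
      ∑ i ∈ (insert s T).erase s, (d i - α i) := by
    refine sum_congr rfl fun i hi => ?_
    have hi' : i ∈ T := mem_of_mem_insert_of_ne (mem_of_mem_erase hi) (ne_of_mem_erase hi)
    rw [min_eq_right (mem_filter.1 hi').2.le]
  rw [hsub, ← add_sum_erase _ _ (mem_insert_self s T), herase, sum_sub_distrib]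
  linarith

/-- Restricting the common part to use the full residual power is lossless:
for every `d ∈ D` there exist `a ∈ [0,1]` and `c` with `c_i ≥ 0`,
`c({1,…,K}) = 1 − a`, and `0 ≤ d_i − c_i ≤ min(a, α_i)` for all `i`. -/
theorem full_residual_power_lossless (K : ℕ) (hK : 1 ≤ K) (α : Fin K → ℝ)
    (hmono : ∀ i j : Fin K, i ≤ j → α j ≤ α i)
    (h0 : ∀ i, 0 ≤ α i) (h1 : ∀ i, α i ≤ 1)
    (d : Fin K → ℝ) (hd : d ∈ outerRegion K α) :
    ∃ (a : ℝ) (c : Fin K → ℝ),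
      0 ≤ a ∧ a ≤ 1 ∧ (∀ i, 0 ≤ c i) ∧
      ∑ i, c i = 1 - a ∧
      (∀ i, 0 ≤ d i - c i ∧ d i - c i ≤ min a (α i)) := by
  rcases le_total (∑ i, d i) 1 with hle | hge
  · refine ⟨1 - ∑ i, d i, d, by linarith, ?_, hd.1, by ring, fun i => ?_⟩
    · linarith [sum_nonneg fun i (_ : i ∈ univ) => hd.1 i]
    · rw [sub_self]
      exact ⟨le_rfl, le_min (by linarith) (h0 i)⟩
  obtain ⟨s, hmax, hsum⟩ := exists_max_add_sum_sub_min_le_one hK hmono hd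
  have hμ0 : ∀ i, 0 ≤ min (d i) (α i) := fun i => le_min (hd.1 i) (h0 i)
  have hM0 : 0 ≤ ∑ i, min (d i) (α i) := sum_nonneg fun i _ => hμ0 i
  rw [sum_sub_distrib] at hsum
  obtain ⟨u, hu0, hu1, hu⟩ : ∃ u : ℝ, 0 ≤ u ∧ u ≤ 1 ∧
      u * ∑ i, min (d i) (α i) = ∑ i, d i - 1 + min (d s) (α s) := by
    have hs0 := hμ0 s
    rcases hM0.eq_or_lt with hM | hM
    · exact ⟨0, le_rfl, zero_le_one, by linarith⟩
    · exact ⟨(∑ i, d i - 1 + min (d s) (α s)) / ∑ i, min (d i) (α i),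
        div_nonneg (by linarith) hM0, (div_le_one hM).2 (by linarith),
        div_mul_cancel₀ _ hM.ne'⟩
  have hle : ∀ i, u * min (d i) (α i) ≤ min (d i) (α i) := fun i =>
    mul_le_of_le_one_left (hμ0 i) hu1
  refine ⟨min (d s) (α s), fun i => d i - u * min (d i) (α i), hμ0 s,
    (min_le_right _ _).trans (h1 s),
    fun i => sub_nonneg.2 ((hle i).trans (min_le_left _ _)), ?_, fun i => ?_⟩
  · rw [sum_sub_distrib, ← mul_sum, hu]
    ring
  · rw [sub_sub_cancel]
    exact ⟨mul_nonneg hu0 (hμ0 i),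
      (hle i).trans (le_min (hmax i) (min_le_right _ _))⟩
end

section
/- The general rate-splitting region with per-user power levels equals the polyhedral outer-bound region: D_RS^* = D. -/
/-!
Since `α` is nonincreasing, the outer-bound inequality for `S` is the strongest of the inequalities
`d(S) ≤ 1 + α(S \ {i})`, `i ∈ S`, so all of them hold on the outer region
(`sum_le_one_add_erase`).

Rate splitting implies the outer bound: the private rate bound gives `p_i ≤ a_i` and, for each pair,
`p_i ≤ (a_i - (a_j - α_i)^+)^+`. Hence `p_i ≤ α_i` unless `a_i` is the strict maximum of the power
levels, and `p_i + p_j ≤ max a + α_i` for every `j ≠ i` when `a_i ≥ a_j`. Together these bound the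
private rates over `S` by `max a + α(S \ {min S})` (`private_sum_le`), and the common rates
contribute at most `1 - max a`.

Conversely, equal power levels suffice: with `a_i = t` for all `i`, the private bound becomes
`min t α_i`. Put `m_i = min d_i α_i`, let `i₀` maximize `m`, and let `t` be the second largest
value of `m`. With `p_i = min d_i (min t α_i)`, the common rate is `d_i₀ - t` for `i₀` and
`(d_i - α_i)^+` for every other user, so the budget `∑ c ≤ 1 - t` is exactly
`d(S) ≤ 1 + α(S \ {i₀})` for `S = {i₀} ∪ {i | α_i < d_i}`.
-/

open Finset

/-- The general rate-splitting region `D_RS^*` with per-user power levels `a_1,…,a_K`. -/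
def rsStarRegion (K : ℕ) (hK : 2 ≤ K) (α : Fin K → ℝ) : Set (Fin K → ℝ) :=
  {d | ∃ (p c a : Fin K → ℝ),
    (∀ i, 0 ≤ a i ∧ a i ≤ 1) ∧
    (∀ i, d i = p i + c i) ∧
    (∀ i, 0 ≤ p i) ∧ (∀ i, 0 ≤ c i) ∧
    (∀ i : Fin K, p i ≤
      max (a i - max ((Finset.univ.erase i).sup'
        (by
          rw [← Finset.card_pos, Finset.card_erase_of_mem (Finset.mem_univ i),
            Finset.card_univ, Fintype.card_fin]
          omega) a - α i) 0) 0) ∧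
    ∑ i, c i ≤ 1 - Finset.univ.sup'
      (by rw [← Finset.card_pos, Finset.card_univ, Fintype.card_fin]; omega) a}

/-- The outer-bound inequality for `S` remains valid when any element of `S`, not only the least,
is the one left out of the `α`-sum. -/
theorem sum_le_one_add_erase {K : ℕ} {α d : Fin K → ℝ}
    (hmono : ∀ i j : Fin K, i ≤ j → α j ≤ α i) (hd : d ∈ outerRegion K α)
    {S : Finset (Fin K)} {i : Fin K} (hi : i ∈ S) :
    ∑ j ∈ S, d j ≤ 1 + ∑ j ∈ S.erase i, α j := by
  have hS : S.Nonempty := ⟨i, hi⟩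
  have h := hd.2 S hS
  have h2 := Finset.add_sum_erase S α (S.min'_mem hS)
  have h3 := Finset.add_sum_erase S α hi
  have h4 := hmono _ _ (S.min'_le i hi)
  linarith

/-- Private rates obeying the pairwise interference bounds, summed over a set `S`, are at most the
top power level `A` plus the `α`-sum over `S \ {m}`, whichever element `m` of `S` is left out. -/
theorem private_sum_le {K : ℕ} {α p a : Fin K → ℝ} {A : ℝ} {S : Finset (Fin K)} {m : Fin K}
    (h0 : ∀ i, 0 ≤ α i) (hA : ∀ i, a i ≤ A)
    (hpa : ∀ i, p i ≤ a i)
    (hp : ∀ i j, j ≠ i → p i ≤ max (a i - max (a j - α i) 0) 0) (hm : m ∈ S) :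
    ∑ i ∈ S, p i ≤ A + ∑ i ∈ S.erase m, α i := by
  by_cases hall : ∀ i ∈ S.erase m, p i ≤ α i
  · have h1 := Finset.add_sum_erase S p hm
    have h2 := Finset.sum_le_sum hall
    linarith [hpa m, hA m]
  · push Not at hall
    obtain ⟨i, hi, hpi⟩ := hall
    have hmi : m ≠ i := (Finset.ne_of_mem_erase hi).symm
    -- A private rate exceeding `α i` forces `a i` to be the strict maximum.
    have htop : ∀ j, j ≠ i → a j < a i := by
      intro j hj
      by_contra hcon
      have := hp i j hj
      grind
    have hrest : ∀ j ∈ (S.erase m).erase i, p j ≤ α j := by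
      intro j hj
      have hji : j ≠ i := Finset.ne_of_mem_erase hj
      have := hp j i hji.symm
      have := htop j hji
      grind
    have hpair : p i + p m ≤ A + α i := by
      have := hp i m hmi
      have := htop m hmi
      have := hA i
      have := hpa m
      have := hpa i
      grind
    have h1 := Finset.add_sum_erase S p hm
    have h2 := Finset.add_sum_erase (S.erase m) p hi
    have h3 := Finset.add_sum_erase (S.erase m) α hi
    have h4 := Finset.sum_le_sum hrest
    linarith

/-- A level `t` separating the largest entry of a nonnegative vector from all other entries. -/
theorem exists_separating_level {K : ℕ} (hK : 2 ≤ K) (m : Fin K → ℝ) (hm : ∀ i, 0 ≤ m i) :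
    ∃ (i₀ : Fin K) (t : ℝ), 0 ≤ t ∧ t ≤ m i₀ ∧ ∀ j, j ≠ i₀ → m j ≤ t := by
  have hne : (univ : Finset (Fin K)).Nonempty := ⟨⟨0, by omega⟩, mem_univ _⟩
  obtain ⟨i₀, -, hi₀⟩ := Finset.exists_max_image univ m hne
  have hne' : (univ.erase i₀).Nonempty := by
    rw [← Finset.card_pos, Finset.card_erase_of_mem (mem_univ _), Finset.card_univ,
      Fintype.card_fin]
    omega
  obtain ⟨i₁, -, hi₁⟩ := Finset.exists_max_image (univ.erase i₀) m hne'
  exact ⟨i₀, m i₁, hm i₁, hi₀ i₁ (mem_univ _),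
    fun j hj => hi₁ j (Finset.mem_erase.2 ⟨hj, mem_univ _⟩)⟩

/-- The general rate-splitting region with per-user power levels equals the
polyhedral outer-bound region: `D_RS^* = D`. -/
theorem rsStar_eq_outer (K : ℕ) (hK : 2 ≤ K) (α : Fin K → ℝ)
    (hmono : ∀ i j : Fin K, i ≤ j → α j ≤ α i)
    (h0 : ∀ i, 0 ≤ α i) (h1 : ∀ i, α i ≤ 1) :
    rsStarRegion K hK α = outerRegion K α := by
  ext d
  constructor
  · rintro ⟨p, c, a, ha, hd, hp0, hc0, hp, hc⟩
    refine ⟨fun i => by linarith [hd i, hp0 i, hc0 i], fun S hS => ?_⟩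
    have hne : (univ : Finset (Fin K)).Nonempty := ⟨⟨0, by omega⟩, mem_univ _⟩
    have hpriv := private_sum_le (A := univ.sup' hne a) (p := p) (a := a) h0
      (fun i => Finset.le_sup' a (mem_univ i))
      (fun i => (hp i).trans (max_le (by
        have := le_max_right ((Finset.univ.erase i).sup' (by
          rw [← Finset.card_pos, Finset.card_erase_of_mem (Finset.mem_univ i),
            Finset.card_univ, Fintype.card_fin]
          omega) a - α i) 0
        linarith) (ha i).1))
      (fun i j hj => (hp i).trans (by
        gcongr
        exact Finset.le_sup' a (Finset.mem_erase.2 ⟨hj, mem_univ _⟩)))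
      (S.min'_mem hS)
    have hcS : ∑ i ∈ S, c i ≤ ∑ i, c i :=
      Finset.sum_le_sum_of_subset_of_nonneg (Finset.subset_univ S) (fun i _ _ => hc0 i)
    simp only [hd, Finset.sum_add_distrib]
    linarith
  · intro hd
    have hd0 := hd.1
    obtain ⟨i₀, t, ht0, ht, hle⟩ := exists_separating_level hK (fun i => min (d i) (α i))
      (fun i => le_min (hd0 i) (h0 i))
    -- Equal power levels `t`; each user puts as much rate as possible into its private part.
    obtain ⟨htd, htα⟩ := le_min_iff.1 ht
    refine ⟨fun i => min (d i) (min t (α i)), fun i => d i - min (d i) (min t (α i)),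
      fun _ => t, fun _ => ⟨ht0, htα.trans (h1 i₀)⟩, fun i => by ring,
      fun i => le_min (hd0 i) (le_min ht0 (h0 i)),
      fun i => sub_nonneg.2 (min_le_left _ _), fun i => ?_, ?_⟩
    · rw [Finset.sup'_const]
      refine (min_le_right _ _).trans (le_max_of_le_left ?_)
      grind
    · rw [Finset.sup'_const]
      set U : Finset (Fin K) := (univ.erase i₀).filter (fun i => α i < d i) with hU
      have hnot : i₀ ∉ U := by simp [hU]
      have hbound := sum_le_one_add_erase hmono hd (Finset.mem_insert_self i₀ U)
      rw [Finset.erase_insert hnot, Finset.sum_insert hnot] at hbound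
      -- For `i ≠ i₀` the level satisfies `min (d i) (α i) ≤ t`, so the common rate is `(d i - α i)^+`.
      have hrest : ∑ i ∈ univ.erase i₀, (d i - min (d i) (min t (α i)))
          = ∑ i ∈ U, (d i - α i) := by
        rw [hU, Finset.sum_filter]
        refine Finset.sum_congr rfl fun i hi => ?_
        have := hle i (Finset.ne_of_mem_erase hi)
        grind
      rw [← Finset.add_sum_erase univ _ (mem_univ i₀), hrest, Finset.sum_sub_distrib,
        min_eq_left htα, min_eq_right htd]
      linarith
end

section
/- Induction hypothesis of the Fourier–Motzkin procedure: for every k ∈ {0, 1, …, K−1}, every d ∈ ℝ^K with d_i ≥ 0 for all i, and every choice of reals c_{k+1}, …, c_K, there exist reals c_1, …, c_k such that (d, (c_1, …, c_K)) ∈ E if and only if (d, (c_{k+1}, …, c_K)) satisfies system P_k. -/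
/-!
The upper-bound constraints of `E` are nondecreasing in `c`, so a completion `c_1, …, c_k` exists
iff the least values allowed by the lower bounds, `c_i = max 0 (d_i - α_i)`, work. Any completion
satisfies `d(S) - α(S) ≤ c(S)` (`sum_sub_le`), which gives `P_k`. Conversely, the sum of the least
values over a set `A` of users `≤ k` is `d(T) - α(T)`, where `T = {j ∈ A : α_j < d_j}`
(`sum_least`), so each upper bound in `E` at the least completion follows from `P_k` at one
explicit set. For user `i > k` this set is `T`. For user `i ≤ k` it is `S = {i} ∪ T`: the bound on
`d(S)` in `P_k` involves `α(S) - α (min S)`, which by monotonicity of `α` is at most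
`α(S) - α i = α(T)`. For the total sum it is `T`, with `α (min T) ≥ 0` dropped, or the
bound `c_{k+1} + ⋯ + c_K ≤ 1` if `T` is empty.
-/

open Finset

/-- The polyhedron `E` in variables `(d, c)` obtained after substituting
`a = 1 - c({1,…,K})`. -/
def Esys (K : ℕ) (α : Fin K → ℝ) (d c : Fin K → ℝ) : Prop :=
  (∀ i, 0 ≤ d i) ∧ (∀ i, 0 ≤ c i) ∧
  (∀ i, d i - c i ≤ α i) ∧
  (∀ i : Fin K, d i + ∑ j ∈ Finset.univ.erase i, c j ≤ 1) ∧
  ∑ j, c j ≤ 1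

/-- System `P_k` of the Fourier–Motzkin procedure.  Users `{k+1,…,K}` correspond to the
indices `i : Fin K` with `k ≤ i.val`, and subsets `S ⊆ {1,…,k}` correspond to
`S : Finset (Fin K)` with `∀ j ∈ S, j.val < k`. -/
def sysP (K : ℕ) (α : Fin K → ℝ) (k : ℕ) (d c : Fin K → ℝ) : Prop :=
  (∀ i : Fin K, k ≤ i.val → 0 ≤ c i) ∧
  (∀ i : Fin K, k ≤ i.val → d i - c i ≤ α i) ∧
  (∀ S : Finset (Fin K), (∀ j ∈ S, j.val < k) → ∀ i : Fin K, k ≤ i.val →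
      ∑ j ∈ S, d j + d i
          + ∑ j ∈ (Finset.univ.filter fun j : Fin K => k ≤ j.val).erase i, c j
        ≤ 1 + ∑ j ∈ S, α j) ∧
  (∀ (S : Finset (Fin K)) (hS : S.Nonempty), (∀ j ∈ S, j.val < k) →
      ∑ j ∈ S, d j + ∑ j ∈ Finset.univ.filter (fun j : Fin K => k ≤ j.val), c j
        ≤ 1 + ∑ j ∈ S.erase (S.min' hS), α j) ∧
  ∑ j ∈ Finset.univ.filter (fun j : Fin K => k ≤ j.val), c j ≤ 1

/-- The completion of `c_{k+1}, …, c_K` by the least values of `c_1, …, c_k` allowed by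
`c_i ≥ 0` and `d_i - c_i ≤ α_i`. -/
noncomputable def leastCompletion {K : ℕ} (α : Fin K → ℝ) (k : ℕ) (d c : Fin K → ℝ) (j : Fin K) :
    ℝ :=
  if k ≤ j.val then c j else max 0 (d j - α j)

/-- The users among the first `k` in `A` at which the lower bound `d_j - α_j` is positive. -/
noncomputable def activeSet {K : ℕ} (α : Fin K → ℝ) (k : ℕ) (d : Fin K → ℝ)
    (A : Finset (Fin K)) : Finset (Fin K) :=
  A.filter fun j => j.val < k ∧ α j < d j

lemma sum_least {K : ℕ} (α : Fin K → ℝ) (k : ℕ) (d c : Fin K → ℝ) (A : Finset (Fin K)) :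
    ∑ j ∈ A, leastCompletion α k d c j =
      ∑ j ∈ A.filter (fun j => k ≤ j.val), c j
        + (∑ j ∈ activeSet α k d A, d j - ∑ j ∈ activeSet α k d A, α j) := by
  rw [activeSet, ← Finset.sum_sub_distrib, Finset.sum_filter, Finset.sum_filter,
    ← Finset.sum_add_distrib]
  refine Finset.sum_congr rfl fun j _ => ?_
  unfold leastCompletion
  by_cases hk : k ≤ j.val
  · simp [hk, not_lt.mpr hk]
  · by_cases hd : α j < d j
    · simp [hk, not_le.mp hk, hd, hd.le]
    · simp [hk, hd, not_lt.mp hd]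

lemma sum_sub_le {K : ℕ} {α d c : Fin K → ℝ} (h : ∀ i, d i - c i ≤ α i) (S : Finset (Fin K)) :
    ∑ j ∈ S, d j ≤ ∑ j ∈ S, α j + ∑ j ∈ S, c j := by
  rw [← Finset.sum_add_distrib]
  exact Finset.sum_le_sum fun j _ => by linarith [h j]

lemma sum_add_sum_le {K : ℕ} {c : Fin K → ℝ} (hc : ∀ i, 0 ≤ c i) {S T U : Finset (Fin K)}
    (hd : Disjoint S T) (hS : S ⊆ U) (hT : T ⊆ U) :
    ∑ j ∈ S, c j + ∑ j ∈ T, c j ≤ ∑ j ∈ U, c j := by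
  rw [← Finset.sum_union hd]
  exact Finset.sum_le_sum_of_subset_of_nonneg (Finset.union_subset hS hT) fun j _ _ => hc j

lemma sysP_of_Esys {K : ℕ} {α : Fin K → ℝ} {k : ℕ} {d c : Fin K → ℝ} (h : Esys K α d c) :
    sysP K α k d c := by
  obtain ⟨_, hc, hdc, hi, hs⟩ := h
  refine ⟨fun i _ => hc i, fun i _ => hdc i, ?_, ?_, ?_⟩
  · intro S hS i hik
    have h1 := sum_sub_le hdc S
    have h2 : ∑ j ∈ S, c j
        + ∑ j ∈ (Finset.univ.filter fun j : Fin K => k ≤ j.val).erase i, c j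
        ≤ ∑ j ∈ Finset.univ.erase i, c j := by
      refine sum_add_sum_le hc (Finset.disjoint_left.mpr fun j hj hj' => ?_) (fun j hj => ?_)
        (Finset.erase_subset_erase _ (Finset.subset_univ _))
      · have h3 := hS j hj
        simp only [Finset.mem_erase, Finset.mem_filter] at hj'
        omega
      · have h3 := hS j hj
        refine Finset.mem_erase.mpr ⟨?_, Finset.mem_univ _⟩
        rintro rfl
        omega
    linarith [hi i]
  · intro S hne hS
    have hm := S.min'_mem hne
    have h1 := sum_sub_le hdc (S.erase (S.min' hne))
    have h2 : ∑ j ∈ S.erase (S.min' hne), c j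
        + ∑ j ∈ Finset.univ.filter (fun j : Fin K => k ≤ j.val), c j
        ≤ ∑ j ∈ Finset.univ.erase (S.min' hne), c j := by
      refine sum_add_sum_le hc (Finset.disjoint_left.mpr fun j hj hj' => ?_)
        (Finset.erase_subset_erase _ (Finset.subset_univ _)) (fun j hj => ?_)
      · have h3 := hS j (Finset.mem_of_mem_erase hj)
        simp only [Finset.mem_filter] at hj'
        omega
      · have h3 := hS _ hm
        refine Finset.mem_erase.mpr ⟨?_, Finset.mem_univ _⟩
        intro h4
        rw [← h4] at h3
        simp only [Finset.mem_filter] at hj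
        omega
    have h3 := Finset.add_sum_erase S d hm
    linarith [hi (S.min' hne)]
  · exact (Finset.sum_le_sum_of_subset_of_nonneg (Finset.subset_univ _) fun j _ _ => hc j).trans hs

lemma sysP_congr {K : ℕ} {α : Fin K → ℝ} {k : ℕ} {d c c' : Fin K → ℝ}
    (hcc : ∀ i : Fin K, k ≤ i.val → c' i = c i) (h : sysP K α k d c') : sysP K α k d c := by
  have hsum : ∀ A ⊆ Finset.univ.filter (fun j : Fin K => k ≤ j.val),
      ∑ j ∈ A, c' j = ∑ j ∈ A, c j := fun A hA =>
    Finset.sum_congr rfl fun j hj => hcc j (Finset.mem_filter.mp (hA hj)).2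
  obtain ⟨h1, h2, h3, h4, h5⟩ := h
  refine ⟨fun i hi => hcc i hi ▸ h1 i hi, fun i hi => hcc i hi ▸ h2 i hi, fun S hS i hi => ?_,
    fun S hne hS => ?_, ?_⟩
  · rw [← hsum _ (Finset.erase_subset _ _)]
    exact h3 S hS i hi
  · rw [← hsum _ subset_rfl]
    exact h4 S hne hS
  · rw [← hsum _ subset_rfl]
    exact h5

lemma Esys_leastCompletion {K : ℕ} {α : Fin K → ℝ} (hmono : ∀ i j : Fin K, i ≤ j → α j ≤ α i)
    (h0 : ∀ i, 0 ≤ α i) {k : ℕ} {d c : Fin K → ℝ} (hd : ∀ i, 0 ≤ d i) (h : sysP K α k d c) :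
    Esys K α d (leastCompletion α k d c) := by
  obtain ⟨h1, h2, h3, h4, h5⟩ := h
  have hact : ∀ A, ∀ j ∈ activeSet α k d A, j.val < k := fun A j hj =>
    (Finset.mem_filter.mp hj).2.1
  refine ⟨hd, fun i => ?_, fun i => ?_, fun i => ?_, ?_⟩
  · unfold leastCompletion
    split_ifs with hi
    exacts [h1 i hi, le_max_left _ _]
  · unfold leastCompletion
    split_ifs with hi
    exacts [h2 i hi, by linarith [le_max_right 0 (d i - α i)]]
  · rw [sum_least]
    set T := activeSet α k d (Finset.univ.erase i)
    by_cases hi : k ≤ i.val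
    · have := h3 T (hact _) i hi
      rw [Finset.filter_erase]
      linarith
    · have hiT : i ∉ T := fun hiT => by simpa using (Finset.mem_filter.mp hiT).1
      have hne : (insert i T).Nonempty := Finset.insert_nonempty _ _
      have hS := h4 (insert i T) hne (fun j hj => by
        rcases Finset.mem_insert.mp hj with rfl | hj
        exacts [not_le.mp hi, hact _ j hj])
      have hα := Finset.add_sum_erase (insert i T) α (Finset.min'_mem _ hne)
      have hle := hmono _ _ (Finset.min'_le (insert i T) i (Finset.mem_insert_self _ _))
      rw [Finset.sum_insert hiT] at hS hα
      rw [Finset.filter_erase, Finset.erase_eq_of_notMem (by simpa using hi)]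
      linarith
  · rw [sum_least]
    set T := activeSet α k d Finset.univ
    rcases T.eq_empty_or_nonempty with hT | hT
    · simpa [hT] using h5
    · have hS := h4 T hT (hact _)
      have hα := Finset.add_sum_erase T α (Finset.min'_mem _ hT)
      linarith [h0 (T.min' hT)]

/-- Induction hypothesis of the Fourier–Motzkin procedure: for every
`k ∈ {0,…,K−1}`, nonnegative `d`, and values `c_{k+1},…,c_K`, there exist
`c_1,…,c_k` completing them to a point of `E` iff system `P_k` holds. -/
theorem fourier_motzkin_induction (K : ℕ) (hK : 1 ≤ K) (α : Fin K → ℝ)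
    (hmono : ∀ i j : Fin K, i ≤ j → α j ≤ α i)
    (h0 : ∀ i, 0 ≤ α i) (h1 : ∀ i, α i ≤ 1) :
    ∀ k : ℕ, k < K → ∀ d : Fin K → ℝ, (∀ i, 0 ≤ d i) → ∀ c : Fin K → ℝ,
      ((∃ c' : Fin K → ℝ, (∀ i : Fin K, k ≤ i.val → c' i = c i) ∧ Esys K α d c')
        ↔ sysP K α k d c) := by
  intro k _ d hd c
  constructor
  · rintro ⟨c', hcc, hE⟩
    exact sysP_congr hcc (sysP_of_Esys hE)
  · exact fun h => ⟨leastCompletion α k d c, fun i hi => if_pos hi,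
      Esys_leastCompletion hmono h0 hd h⟩
end

section
/- Single Fourier–Motzkin elimination step: for every k ∈ {0, 1, …, K−2}, every d ∈ ℝ^K with d_i ≥ 0 for all i, and every choice of reals c_{k+2}, …, c_K, there exists a real c_{k+1} such that (d, (c_{k+1}, …, c_K)) satisfies system P_k if and only if (d, (c_{k+2}, …, c_K)) satisfies system P_{k+1}. -/
/-!
Write `p` for the index `k` of the eliminated user and `C` for the sum of `c` over the indices
beyond `p`.  Once `x := c p` is separated out (`sysP_update_iff`), the constraints of `P_k` on `x`
are the lower bounds `0 ≤ x` and `d p - α p ≤ x` and, besides `x + C ≤ 1`, a family of upper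
bounds indexed by the sets `S` of indices below `p`.  On the other side, a set of indices below `k + 1` is either such
an `S` or `insert p S` (`forall_below_succ`).  Pairing an upper bound for `S` with `0 ≤ x` gives the
constraint of `P_{k+1}` for `S`; pairing it with `d p - α p ≤ x` gives the one for `insert p S`,
because `p` is the largest element, so `insert p S` and a nonempty `S` have the same minimum
(`sum_erase_min_insert`).  Pairing `x + C ≤ 1` with `0 ≤ x` gives `C ≤ 1`, and pairing it with
`d p - α p ≤ x` gives only a weaker form of `d p + C ≤ 1`.

The remaining constraints of `P_k`, `d(S) + d p + C ≤ 1 + α(S)`, do not involve `x`.  For `S = ∅`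
this is the constraint of `P_{k+1}` for `{p}`, and for nonempty `S` it follows from the one for
`insert p S` since `α p ≤ α (min S)`.  For the existence of `x`, the choice
`x = max 0 (d p - α p)` works.
-/

open Finset

/-- The system `P_k` with the value `x` of `c` at the index `k` separated from the others. -/
lemma sysP_update_iff {K : ℕ} {α : Fin K → ℝ} {k : ℕ} (hk : k < K) (d c : Fin K → ℝ) (x : ℝ) :
    sysP K α k d (Function.update c ⟨k, hk⟩ x) ↔
      (0 ≤ x ∧ ∀ i : Fin K, k + 1 ≤ i.val → 0 ≤ c i) ∧
      (d ⟨k, hk⟩ - x ≤ α ⟨k, hk⟩ ∧ ∀ i : Fin K, k + 1 ≤ i.val → d i - c i ≤ α i) ∧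
      (∀ S : Finset (Fin K), (∀ j ∈ S, j.val < k) →
        ∑ j ∈ S, d j + d ⟨k, hk⟩ + ∑ j ∈ univ.filter (fun j : Fin K => k + 1 ≤ j.val), c j
          ≤ 1 + ∑ j ∈ S, α j ∧
        ∀ i : Fin K, k + 1 ≤ i.val →
          ∑ j ∈ S, d j + d i
            + (x + ∑ j ∈ (univ.filter fun j : Fin K => k + 1 ≤ j.val).erase i, c j)
          ≤ 1 + ∑ j ∈ S, α j) ∧
      (∀ (S : Finset (Fin K)) (hS : S.Nonempty), (∀ j ∈ S, j.val < k) →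
        ∑ j ∈ S, d j + (x + ∑ j ∈ univ.filter (fun j : Fin K => k + 1 ≤ j.val), c j)
          ≤ 1 + ∑ j ∈ S.erase (S.min' hS), α j) ∧
      x + ∑ j ∈ univ.filter (fun j : Fin K => k + 1 ≤ j.val), c j ≤ 1 := by
  have split : ∀ Q : Fin K → Prop,
      (∀ i : Fin K, k ≤ i.val → Q i) ↔ Q ⟨k, hk⟩ ∧ ∀ i : Fin K, k + 1 ≤ i.val → Q i := by
    intro Q
    refine ⟨fun h => ⟨h _ le_rfl, fun i hi => h i (by omega)⟩, fun ⟨hp, h⟩ i hi => ?_⟩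
    rcases Nat.eq_or_lt_of_le hi with e | e
    · have : i = ⟨k, hk⟩ := Fin.ext e.symm
      exact this ▸ hp
    · exact h i e
  have ne_p : ∀ i : Fin K, k + 1 ≤ i.val → i ≠ ⟨k, hk⟩ := by
    rintro i hi rfl
    simp at hi
  have upd : ∀ i : Fin K, k + 1 ≤ i.val → Function.update c ⟨k, hk⟩ x i = c i :=
    fun i hi => Function.update_of_ne (ne_p i hi) _ _
  have hF : (univ.filter fun j : Fin K => k ≤ j.val)
      = insert ⟨k, hk⟩ (univ.filter fun j : Fin K => k + 1 ≤ j.val) := by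
    ext j
    simp only [mem_filter, mem_univ, true_and, mem_insert, Fin.ext_iff]
    omega
  have hp : (⟨k, hk⟩ : Fin K) ∉ univ.filter fun j : Fin K => k + 1 ≤ j.val := by simp
  have sum_F : ∑ j ∈ univ.filter (fun j : Fin K => k + 1 ≤ j.val),
      Function.update c ⟨k, hk⟩ x j
      = ∑ j ∈ univ.filter (fun j : Fin K => k + 1 ≤ j.val), c j :=
    sum_congr rfl fun j hj => upd j (mem_filter.1 hj).2
  have sum_erase : ∀ i : Fin K, k + 1 ≤ i.val →
      ∑ j ∈ (insert ⟨k, hk⟩ (univ.filter fun j : Fin K => k + 1 ≤ j.val)).erase i,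
        Function.update c ⟨k, hk⟩ x j
      = x + ∑ j ∈ (univ.filter fun j : Fin K => k + 1 ≤ j.val).erase i, c j := by
    intro i hi
    rw [erase_insert_of_ne (ne_p i hi).symm,
      sum_insert (fun h => hp (mem_of_mem_erase h)), Function.update_self]
    congr 1
    exact sum_congr rfl fun j hj => upd j (mem_filter.1 (mem_of_mem_erase hj)).2
  unfold sysP
  simp only [split, hF, sum_insert hp, erase_insert hp, Function.update_self, sum_F]
  simp +contextual only [upd, sum_erase]

/-- A set of indices below `k + 1` is a set of indices below `k`, possibly with `k` inserted. -/
lemma forall_below_succ {K k : ℕ} (hk : k < K) (Q : Finset (Fin K) → Prop) :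
    (∀ S : Finset (Fin K), (∀ j ∈ S, j.val < k + 1) → Q S) ↔
      ∀ S : Finset (Fin K), (∀ j ∈ S, j.val < k) → Q S ∧ Q (insert ⟨k, hk⟩ S) := by
  refine ⟨fun h S hS => ⟨h S fun j hj => (hS j hj).trans (Nat.lt_succ_self k), h _ ?_⟩,
    fun h S hS => ?_⟩
  · intro j hj
    rcases mem_insert.1 hj with rfl | hj
    · exact Nat.lt_succ_self k
    · exact (hS j hj).trans (Nat.lt_succ_self k)
  · have hT : ∀ j ∈ S.erase ⟨k, hk⟩, j.val < k := by
      intro j hj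
      have h2 := hS j (mem_of_mem_erase hj)
      have h3 : j.val ≠ k := fun e => ne_of_mem_erase hj (Fin.ext e)
      omega
    by_cases hp : (⟨k, hk⟩ : Fin K) ∈ S
    · have := (h _ hT).2
      rwa [insert_erase hp] at this
    · have := (h _ hT).1
      rwa [erase_eq_of_notMem hp] at this

/-- Inserting an index above all of a nonempty `S` leaves the minimum unchanged. -/
lemma sum_erase_min_insert {K k : ℕ} (hk : k < K) (α : Fin K → ℝ) (S : Finset (Fin K))
    (hS : S.Nonempty) (hSk : ∀ j ∈ S, j.val < k) (h : (insert ⟨k, hk⟩ S).Nonempty) :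
    ∑ j ∈ (insert ⟨k, hk⟩ S).erase ((insert ⟨k, hk⟩ S).min' h), α j
      = α ⟨k, hk⟩ + ∑ j ∈ S.erase (S.min' hS), α j := by
  have hlt : S.min' hS < ⟨k, hk⟩ := hSk _ (S.min'_mem hS)
  have hp : (⟨k, hk⟩ : Fin K) ∉ S := fun hp => lt_irrefl _ (hSk _ hp)
  rw [min'_insert _ _ hS, min_eq_right hlt.le, erase_insert_of_ne hlt.ne',
    sum_insert fun hm => hp (mem_of_mem_erase hm)]

/-- Single Fourier–Motzkin elimination step: eliminating the variable
`c_{k+1}` from system `P_k` yields system `P_{k+1}`. -/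
theorem fourier_motzkin_step (K : ℕ) (hK : 2 ≤ K) (α : Fin K → ℝ)
    (hmono : ∀ i j : Fin K, i ≤ j → α j ≤ α i)
    (h0 : ∀ i, 0 ≤ α i) (h1 : ∀ i, α i ≤ 1) :
    ∀ k : ℕ, ∀ hk : k + 2 ≤ K, ∀ d : Fin K → ℝ, (∀ i, 0 ≤ d i) →
      ∀ c : Fin K → ℝ,
        ((∃ x : ℝ, sysP K α k d (Function.update c (⟨k, by omega⟩ : Fin K) x))
          ↔ sysP K α (k + 1) d c) := by
  intro k hk d _ c
  have hkK : k < K := by omega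
  have hp : ∀ S : Finset (Fin K), (∀ j ∈ S, j.val < k) → (⟨k, hkK⟩ : Fin K) ∉ S :=
    fun S hS h => lt_irrefl _ (hS _ h)
  simp only [sysP_update_iff hkK]
  constructor
  · rintro ⟨x, ⟨hx, hc⟩, ⟨hpx, hd⟩, h3, h4, h5⟩
    refine ⟨hc, hd, ?_, ?_, by linarith⟩
    · rw [forall_below_succ hkK]
      refine fun S hS => ⟨fun i hi => ?_, fun i hi => ?_⟩
      · have := (h3 S hS).2 i hi
        linarith
      · have := (h3 S hS).2 i hi
        rw [sum_insert (hp S hS), sum_insert (hp S hS)]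
        linarith
    · intro S hne hS
      revert S
      suffices H : ∀ S : Finset (Fin K), (∀ j ∈ S, j.val < k + 1) → ∀ hS : S.Nonempty,
          ∑ j ∈ S, d j + ∑ j ∈ univ.filter (fun j : Fin K => k + 1 ≤ j.val), c j
            ≤ 1 + ∑ j ∈ S.erase (S.min' hS), α j from fun S hne hS => H S hS hne
      rw [forall_below_succ hkK]
      refine fun S hS => ⟨fun hne => ?_, fun hne => ?_⟩
      · have := h4 S hne hS
        linarith
      · rcases S.eq_empty_or_nonempty with rfl | hne'
        · have := (h3 ∅ hS).1
          simpa using this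
        · have := h4 S hne' hS
          rw [sum_insert (hp S hS), sum_erase_min_insert hkK α S hne' hS]
          linarith
  · rintro ⟨hc, hd, h3, h4, h5⟩
    rw [forall_below_succ hkK] at h3
    have h4' : ∀ S : Finset (Fin K), (∀ j ∈ S, j.val < k + 1) → ∀ hS : S.Nonempty,
        ∑ j ∈ S, d j + ∑ j ∈ univ.filter (fun j : Fin K => k + 1 ≤ j.val), c j
          ≤ 1 + ∑ j ∈ S.erase (S.min' hS), α j := fun S hS hne => h4 S hne hS
    rw [forall_below_succ hkK] at h4'
    have hsingle : d ⟨k, hkK⟩ + ∑ j ∈ univ.filter (fun j : Fin K => k + 1 ≤ j.val), c j ≤ 1 := by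
      have := (h4' ∅ (by simp)).2 (by simp)
      simpa using this
    have hα := h0 ⟨k, hkK⟩
    refine ⟨max 0 (d ⟨k, hkK⟩ - α ⟨k, hkK⟩), ⟨le_max_left _ _, hc⟩,
      ⟨by linarith [le_max_right 0 (d ⟨k, hkK⟩ - α ⟨k, hkK⟩)], hd⟩,
      fun S hS => ⟨?_, fun i hi => ?_⟩, fun S hne hS => ?_, ?_⟩
    · rcases S.eq_empty_or_nonempty with rfl | hne
      · simpa using hsingle
      · have h := (h4' S hS).2 (insert_nonempty _ _)
        rw [sum_insert (hp S hS), sum_erase_min_insert hkK α S hne hS] at h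
        have hmin : α ⟨k, hkK⟩ ≤ α (S.min' hne) := hmono _ _ (hS _ (S.min'_mem hne)).le
        have hsum := add_sum_erase S α (S.min'_mem hne)
        linarith
    · have h := (h3 S hS).1 i hi
      have h' := (h3 S hS).2 i hi
      rw [sum_insert (hp S hS), sum_insert (hp S hS)] at h'
      rcases max_cases 0 (d ⟨k, hkK⟩ - α ⟨k, hkK⟩) with ⟨e, _⟩ | ⟨e, _⟩ <;> rw [e] <;> linarith
    · have h := (h4' S hS).1 hne
      have h' := (h4' S hS).2 (insert_nonempty _ _)
      rw [sum_insert (hp S hS), sum_erase_min_insert hkK α S hne hS] at h'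
      rcases max_cases 0 (d ⟨k, hkK⟩ - α ⟨k, hkK⟩) with ⟨e, _⟩ | ⟨e, _⟩ <;> rw [e] <;> linarith
    · rcases max_cases 0 (d ⟨k, hkK⟩ - α ⟨k, hkK⟩) with ⟨e, _⟩ | ⟨e, _⟩ <;> rw [e] <;> linarith
end

section
/- Final Fourier–Motzkin elimination step: for every d ∈ ℝ^K with d_i ≥ 0 for all i, there exists a real c_K such that (d, c_K) satisfies system P_{K−1} if and only if d ∈ D. -/
/-!
With only the last user `L` left, put `c = c_L`.  Besides `0 ≤ c` and `d_L - α_L ≤ c`, the system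
says `d(S) + d_L ≤ 1 + α(S)`, `d(S) + c ≤ 1 + α(S \ {min S})` and `c ≤ 1`, for `S` avoiding `L`.
Adding `d_L - α_L ≤ c` to the second family gives the inequality of the outer region for `S ∪ {L}`,
because `L` is the largest index and so `min (S ∪ {L}) = min S` (`sum_erase_min'_insert_last`);
`0 ≤ c` gives the one for `S` itself, and the first family at `S = ∅` gives `d_L ≤ 1`.
Conversely, `c = max 0 (d_L - α_L)` works: the first family is implied by the outer region since
`α_L ≤ α_{min S}` by monotonicity (at `S = ∅`, since `d_L ≤ 1`), and `c ≤ 1` since `d_L ≤ 1` and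
`0 ≤ α_L`.
-/

open Finset

theorem filter_le_val_eq_last (n : ℕ) :
    (Finset.univ.filter fun j : Fin (n + 1) => n ≤ j.val) = {Fin.last n} := by
  ext j
  simp only [mem_filter, mem_univ, true_and, mem_singleton, Fin.ext_iff, Fin.val_last]
  omega

/-- Adjoining the largest index to a nonempty set does not change its minimum, so the right-hand
side of the outer bound only gains the last summand. -/
theorem sum_erase_min'_insert_last {n : ℕ} (f : Fin (n + 1) → ℝ) (S : Finset (Fin (n + 1)))
    (hS : S.Nonempty) (hL : Fin.last n ∉ S) (hT : (insert (Fin.last n) S).Nonempty) :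
    ∑ i ∈ (insert (Fin.last n) S).erase ((insert (Fin.last n) S).min' hT), f i
      = f (Fin.last n) + ∑ i ∈ S.erase (S.min' hS), f i := by
  have hmin : (insert (Fin.last n) S).min' hT = S.min' hS := by
    rw [Finset.min'_insert _ _ hS]
    exact min_eq_right (Fin.le_last _)
  have hne : Fin.last n ≠ S.min' hS := fun h => hL (h ▸ S.min'_mem hS)
  rw [hmin, Finset.erase_insert_of_ne hne,
    Finset.sum_insert (fun h => hL (Finset.mem_of_mem_erase h))]

/-- System `P_{K-1}` with its single remaining variable written out. -/
theorem sysP_last_iff {n : ℕ} (α d : Fin (n + 1) → ℝ) (c : ℝ) :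
    sysP (n + 1) α n d (fun _ => c) ↔
      0 ≤ c ∧ d (Fin.last n) - c ≤ α (Fin.last n) ∧
      (∀ S : Finset (Fin (n + 1)), Fin.last n ∉ S →
        ∑ j ∈ S, d j + d (Fin.last n) ≤ 1 + ∑ j ∈ S, α j) ∧
      (∀ (S : Finset (Fin (n + 1))) (hS : S.Nonempty), Fin.last n ∉ S →
        ∑ j ∈ S, d j + c ≤ 1 + ∑ j ∈ S.erase (S.min' hS), α j) ∧
      c ≤ 1 := by
  have hlast : ∀ i : Fin (n + 1), n ≤ i.val ↔ i = Fin.last n := by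
    intro i
    rw [Fin.ext_iff, Fin.val_last]
    omega
  have hset : ∀ S : Finset (Fin (n + 1)), (∀ j ∈ S, j.val < n) ↔ Fin.last n ∉ S := by
    intro S
    constructor
    · intro h hm
      simpa using h _ hm
    · intro h j hj
      by_contra hlt
      exact h ((hlast j).1 (not_lt.1 hlt) ▸ hj)
  unfold sysP
  simp only [filter_le_val_eq_last, hset]
  simp only [hlast, forall_eq, Finset.erase_singleton, Finset.sum_empty, Finset.sum_singleton, add_zero]

/-- Final Fourier–Motzkin elimination step: for nonnegative `d`, there exists
`c_K` satisfying system `P_{K−1}` iff `d ∈ D`. -/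
theorem fourier_motzkin_final (K : ℕ) (hK : 1 ≤ K) (α : Fin K → ℝ)
    (hmono : ∀ i j : Fin K, i ≤ j → α j ≤ α i)
    (h0 : ∀ i, 0 ≤ α i) (h1 : ∀ i, α i ≤ 1)
    (d : Fin K → ℝ) (hd : ∀ i, 0 ≤ d i) :
    (∃ cK : ℝ, sysP K α (K - 1) d (fun _ => cK)) ↔ d ∈ outerRegion K α := by
  obtain ⟨n, rfl⟩ : ∃ n, K = n + 1 := ⟨K - 1, by omega⟩
  simp only [Nat.add_sub_cancel, sysP_last_iff]
  constructor
  · rintro ⟨c, hc0, hcd, hA, hB, -⟩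
    refine ⟨hd, fun T hT => ?_⟩
    by_cases hL : Fin.last n ∈ T
    · obtain ⟨S, hLS, rfl⟩ : ∃ S, Fin.last n ∉ S ∧ insert (Fin.last n) S = T :=
        ⟨T.erase (Fin.last n), Finset.notMem_erase _ _, Finset.insert_erase hL⟩
      rcases S.eq_empty_or_nonempty with rfl | hS
      · have := hA ∅ hLS
        simpa using this
      · rw [sum_erase_min'_insert_last α S hS hLS, Finset.sum_insert hLS]
        linarith [hB S hS hLS]
    · linarith [hB T hT hL]
  · rintro ⟨-, hD⟩
    have hdL : d (Fin.last n) ≤ 1 := by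
      simpa using hD {Fin.last n} (Finset.singleton_nonempty _)
    have hins : ∀ (S : Finset (Fin (n + 1))) (hS : S.Nonempty), Fin.last n ∉ S →
        d (Fin.last n) + ∑ j ∈ S, d j
          ≤ 1 + (α (Fin.last n) + ∑ j ∈ S.erase (S.min' hS), α j) := by
      intro S hS hLS
      have h := hD (insert (Fin.last n) S) (Finset.insert_nonempty _ _)
      rwa [sum_erase_min'_insert_last α S hS hLS, Finset.sum_insert hLS] at h
    refine ⟨max 0 (d (Fin.last n) - α (Fin.last n)), le_max_left _ _, ?_, ?_, ?_, ?_⟩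
    · linarith [le_max_right 0 (d (Fin.last n) - α (Fin.last n))]
    · intro S hLS
      rcases S.eq_empty_or_nonempty with rfl | hS
      · simpa using hdL
      · have hsum := Finset.add_sum_erase S α (S.min'_mem hS)
        linarith [hins S hS hLS, hmono (S.min' hS) (Fin.last n) (Fin.le_last _)]
    · intro S hS hLS
      rcases max_cases 0 (d (Fin.last n) - α (Fin.last n)) with ⟨h, -⟩ | ⟨h, -⟩
      · rw [h]
        linarith [hD S hS]
      · rw [h]
        linarith [hins S hS hLS]
    · exact max_le zero_le_one (by linarith [h0 (Fin.last n)])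
end

section
/- Sum-DoF: the maximum of d_1 + d_2 + ⋯ + d_K over d ∈ D equals 1 + α_2 + α_3 + ⋯ + α_K, and it is attained at the tuple d = (1, α_2, α_3, …, α_K). -/
/-!
The upper bound is the defining inequality of the region for `S = univ`, whose minimum is the
first index. For membership of `(1, α_2, …, α_K)`, in the inequality for `S` the coordinate at
`min S` is at most `1` (because every `α_i ≤ 1`), while all other elements of `S` are nonzero
indices, where the tuple coincides with `α`. For `S = univ` the same splitting is an equality,
which computes the sum.
-/

open Finset

/-- Sum-DoF: the maximum of `d_1 + ⋯ + d_K` over `d ∈ D` equals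
`1 + α_2 + ⋯ + α_K`, attained at `d = (1, α_2, …, α_K)`. -/
theorem sum_dof (K : ℕ) (hK : 1 ≤ K) (α : Fin K → ℝ)
    (hmono : ∀ i j : Fin K, i ≤ j → α j ≤ α i)
    (h0 : ∀ i, 0 ≤ α i) (h1 : ∀ i, α i ≤ 1) :
    (fun i : Fin K => if i.val = 0 then 1 else α i) ∈ outerRegion K α ∧
    ∑ i, (fun i : Fin K => if i.val = 0 then 1 else α i) i
      = 1 + ∑ i ∈ Finset.univ.erase (⟨0, by omega⟩ : Fin K), α i ∧
    ∀ d ∈ outerRegion K α,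
      ∑ i, d i ≤ 1 + ∑ i ∈ Finset.univ.erase (⟨0, by omega⟩ : Fin K), α i := by
  -- Away from the minimum of `S` every index is nonzero, so the tuple agrees with `α` there.
  have hrest : ∀ (S : Finset (Fin K)) (m : Fin K), (∀ i ∈ S, m ≤ i) →
      ∑ i ∈ S.erase m, (if i.val = 0 then 1 else α i) = ∑ i ∈ S.erase m, α i := by
    intro S m hm
    refine Finset.sum_congr rfl fun i hi => if_neg ?_
    obtain ⟨hne, hiS⟩ := Finset.mem_erase.mp hi
    have hlt : m < i := lt_of_le_of_ne (hm i hiS) hne.symm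
    omega
  refine ⟨⟨fun i => ?_, fun S hS => ?_⟩, ?_, fun d hd => ?_⟩
  · dsimp only
    split_ifs
    exacts [zero_le_one, h0 i]
  · rw [← Finset.add_sum_erase S _ (S.min'_mem hS), hrest S _ fun i hi => S.min'_le i hi]
    gcongr
    split_ifs
    exacts [le_rfl, h1 _]
  · rw [← Finset.add_sum_erase univ _ (Finset.mem_univ (⟨0, by omega⟩ : Fin K)),
      hrest univ _ fun i _ => Nat.zero_le i.val]
    simp
  · have hne : (univ : Finset (Fin K)).Nonempty := ⟨⟨0, by omega⟩, Finset.mem_univ _⟩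
    have hmin : univ.min' hne = (⟨0, by omega⟩ : Fin K) :=
      le_antisymm (Finset.min'_le _ _ (Finset.mem_univ _)) (Nat.zero_le _)
    simpa only [hmin] using hd.2 univ hne
end

section
/- The sum-DoF optimal tuple (1, α_2, α_3, …, α_K) belongs to the single-power-level rate-splitting region D_RS. -/
open Finset

/-- The sum-DoF optimal tuple `(1, α_2, …, α_K)` belongs to the
single-power-level rate-splitting region `D_RS`. -/
theorem sum_dof_tuple_mem_rs (K : ℕ) (hK : 1 ≤ K) (α : Fin K → ℝ)
    (hmono : ∀ i j : Fin K, i ≤ j → α j ≤ α i)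
    (h0 : ∀ i, 0 ≤ α i) (h1 : ∀ i, α i ≤ 1) :
    (fun i : Fin K => if i.val = 0 then 1 else α i) ∈ rsRegion K α := by
  -- Witness: `a = α 0` and `p = α`, so the only common stream is the rest `1 - α 0` of user `0`.
  -- The bound `p i ≤ a` is exactly where monotonicity of `α` enters.
  let z : Fin K := ⟨0, hK⟩
  refine ⟨α, fun i => if i = z then 1 - α z else 0, α z, h0 z, h1 z, ?_, h0, ?_, ?_, ?_⟩
  · intro i
    by_cases hi : i = z
    · simp [hi, z]
    · have hv : i.val ≠ 0 := fun h => hi (Fin.ext h)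
      simp [hi, hv]
  · intro i
    dsimp only
    split_ifs
    · exact sub_nonneg.2 (h1 z)
    · exact le_rfl
  · intro i
    exact le_min (hmono z i (Nat.zero_le _)) le_rfl
  · simp
end
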